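/- arXiv:2202.09951 — 2 statements merged into one kernel-verified Lean document; each statement's English description precedes it below -/
import Mathlib

section
/- Let Σ and V be finite-dimensional real inner product spaces, let a : Σ × Σ → ℝ be a bilinear form that is positive definite (a(τ,τ) > 0 for all τ ≠ 0), let ε : V → Σ be a linear map, and let s : V × V → ℝ be a symmetric bilinear form that is positive semidefinite (s(w,w) ≥ 0 for all w). Assume the kernel condition: for every v ∈ V, if ε(v) = 0 and s(v,v) = 0 then v = 0. Let Δt > 0. If (σ, v) ∈ Σ × V satisfies (1 + Δt)·a(σ, τ) − Δt·⟨ε(v), τ⟩ = 0 for all τ ∈ Σ, and ⟨σ, ε(w)⟩ + s(v, w) = 0 for all w ∈ V, then σ = 0 and v = 0. -/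
open scoped RealInnerProductSpace

/-- Unique solvability of the backward-Euler fully discrete weak Galerkin scheme
(Theorem 4.1), abstract finite-dimensional form: the homogeneous system only has
the zero solution. -/
theorem fully_discrete_unique
    {S V : Type*}
    [NormedAddCommGroup S] [InnerProductSpace ℝ S] [FiniteDimensional ℝ S]
    [NormedAddCommGroup V] [InnerProductSpace ℝ V] [FiniteDimensional ℝ V]
    (a : S →ₗ[ℝ] S →ₗ[ℝ] ℝ)
    (ha_pos : ∀ τ : S, τ ≠ 0 → 0 < a τ τ)
    (ε : V →ₗ[ℝ] S)
    (s : V →ₗ[ℝ] V →ₗ[ℝ] ℝ)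
    (hs_symm : ∀ w₁ w₂ : V, s w₁ w₂ = s w₂ w₁)
    (hs_psd : ∀ w : V, 0 ≤ s w w)
    (hker : ∀ v : V, ε v = 0 → s v v = 0 → v = 0)
    (Δt : ℝ) (hΔt : 0 < Δt)
    (σ : S) (v : V)
    (heq1 : ∀ τ : S, (1 + Δt) * a σ τ - Δt * ⟪ε v, τ⟫ = 0)
    (heq2 : ∀ w : V, ⟪σ, ε w⟫ + s v w = 0) :
    σ = 0 ∧ v = 0 := by
  -- Energy identity: testing with `τ = σ` and `w = v` and eliminating `⟪ε v, σ⟫` gives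
  -- `(1 + Δt) * a σ σ + Δt * s v v = 0`, a sum of two nonnegative terms.
  have hσ : σ = 0 := by
    by_contra hne
    have h1 := heq1 σ
    have h2 := heq2 v
    rw [real_inner_comm] at h2
    have h3 : 0 < (1 + Δt) * a σ σ := mul_pos (by linarith) (ha_pos σ hne)
    have h4 : 0 ≤ Δt * s v v := mul_nonneg hΔt.le (hs_psd v)
    have h5 : ⟪ε v, σ⟫ = -s v v := by linarith
    rw [h5] at h1
    linarith
  subst hσ
  refine ⟨rfl, hker v ?_ ?_⟩
  · -- With `σ = 0`, testing the first equation with `τ = ε v` leaves `Δt * ‖ε v‖ ^ 2 = 0`.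
    simpa [hΔt.ne'] using heq1 (ε v)
  · simpa using heq2 v
end

section
/- Let Σ and V be finite-dimensional real inner product spaces, let A : Σ → Σ be a symmetric linear map (⟨Aσ, τ⟩ = ⟨σ, Aτ⟩ for all σ, τ), let ε : V → Σ be a linear map, and let s : V × V → ℝ be a bilinear form. Let Δt > 0, let N ≥ 1 be an integer, and let σ⁰, σ¹, …, σᴺ ∈ Σ and v¹, …, vᴺ, f¹, …, fᴺ ∈ V satisfy, for each n = 1, …, N: (1/Δt)·⟨A(σⁿ − σⁿ⁻¹), τ⟩ + ⟨Aσⁿ, τ⟩ − ⟨ε(vⁿ), τ⟩ = 0 for all τ ∈ Σ, and ⟨σⁿ, ε(w)⟩ + s(vⁿ, w) = ⟨fⁿ, w⟩ for all w ∈ V. Then for every j with 1 ≤ j ≤ N the identity holds: ∑_{n=1}^{j} ⟨A(σⁿ − σⁿ⁻¹), σⁿ − σⁿ⁻¹⟩ + ⟨Aσʲ, σʲ⟩ + 2Δt·∑_{n=1}^{j} ⟨Aσⁿ, σⁿ⟩ + 2Δt·∑_{n=1}^{j} s(vⁿ, vⁿ) = ⟨Aσ⁰, σ⁰⟩ + 2Δt·∑_{n=1}^{j}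 ⟨fⁿ, vⁿ⟩. -/
/-!
Testing the two equations of the scheme at step `n` with `σ n` and `v n` eliminates the coupling
term `⟪ε (v n), σ n⟫`; the remaining increment term is rewritten by the polarization identity
`two_inner_map_sub`, whose last two terms telescope when the steps are summed (here: induction on
the final index `j`, which may start from the trivial case `j = 0`).
-/

open scoped RealInnerProductSpace
open Finset

/-- Polarization identity for the quadratic form of a symmetric map; it turns the
backward-Euler difference quotient into a telescoping difference plus a dissipation term. -/
lemma two_inner_map_sub {S : Type*} [NormedAddCommGroup S] [InnerProductSpace ℝ S]
    (A : S →ₗ[ℝ] S) (hA : ∀ σ τ : S, ⟪A σ, τ⟫ = ⟪σ, A τ⟫) (p q : S) :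
    2 * ⟪A (p - q), p⟫ = ⟪A (p - q), p - q⟫ + ⟪A p, p⟫ - ⟪A q, q⟫ := by
  have h : ⟪A p, q⟫ = ⟪A q, p⟫ := by rw [hA, real_inner_comm]
  simp only [map_sub, inner_sub_left, inner_sub_right]
  linarith

/-- Discrete energy identity (equation (4.5), Theorem 4.2) for the
backward-Euler fully discrete weak Galerkin scheme, abstract form. -/
theorem discrete_energy_identity
    {S W : Type*}
    [NormedAddCommGroup S] [InnerProductSpace ℝ S] [FiniteDimensional ℝ S]
    [NormedAddCommGroup W] [InnerProductSpace ℝ W] [FiniteDimensional ℝ W]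
    (A : S →ₗ[ℝ] S)
    (hA : ∀ σ τ : S, ⟪A σ, τ⟫ = ⟪σ, A τ⟫)
    (ε : W →ₗ[ℝ] S)
    (s : W →ₗ[ℝ] W →ₗ[ℝ] ℝ)
    (Δt : ℝ) (hΔt : 0 < Δt)
    (N : ℕ) (hN : 1 ≤ N)
    (σ : ℕ → S) (v f : ℕ → W)
    (heq1 : ∀ n, 1 ≤ n → n ≤ N → ∀ τ : S,
      (1 / Δt) * ⟪A (σ n - σ (n - 1)), τ⟫ + ⟪A (σ n), τ⟫ - ⟪ε (v n), τ⟫ = 0)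
    (heq2 : ∀ n, 1 ≤ n → n ≤ N → ∀ w : W,
      ⟪σ n, ε w⟫ + s (v n) w = ⟪f n, w⟫) :
    ∀ j, 1 ≤ j → j ≤ N →
      (∑ n ∈ Finset.Icc 1 j, ⟪A (σ n - σ (n - 1)), σ n - σ (n - 1)⟫) +
        ⟪A (σ j), σ j⟫ +
        2 * Δt * (∑ n ∈ Finset.Icc 1 j, ⟪A (σ n), σ n⟫) +
        2 * Δt * (∑ n ∈ Finset.Icc 1 j, s (v n) (v n))
      = ⟪A (σ 0), σ 0⟫ + 2 * Δt * (∑ n ∈ Finset.Icc 1 j, ⟪f n, v n⟫) := by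
  intro j hj
  clear hj
  induction j with
  -- The identity holds trivially at `j = 0`, which serves as the base case.
  | zero => simp
  | succ k ih =>
    intro hk
    have ihk := ih (by omega)
    have h1 := heq1 (k + 1) (by omega) hk (σ (k + 1))
    have h2 := heq2 (k + 1) (by omega) hk (v (k + 1))
    have h3 := two_inner_map_sub A hA (σ (k + 1)) (σ k)
    simp only [Finset.sum_Icc_succ_top (Nat.le_add_left 1 k), Nat.add_sub_cancel] at h1 ⊢
    rw [real_inner_comm] at h2
    have h4 : ⟪A (σ (k + 1) - σ k), σ (k + 1)⟫ + Δt * ⟪A (σ (k + 1)), σ (k + 1)⟫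
        = Δt * ⟪ε (v (k + 1)), σ (k + 1)⟫ := by
      field_simp at h1
      linarith
    linear_combination ihk - h3 + 2 * h4 + 2 * Δt * h2
end
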